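/- Define ψ_3^1 := i Σ_{j=1}^q Σ_{|α|+|β|=2, α''≠0} (c_{α,β+e_j}/(α!β!)) · [2|λ_j|⟨|λ''|,α''⟩ / ((⟨|λ''|,α''⟩+⟨|λ'|,β'⟩)(⟨|λ''|,α''⟩+⟨|λ'|,β'⟩+|λ_j|))] z̄^α z^β w_j − i Σ_{j=q+1}^n Σ_{|α|+|β|=2, β'≠0} (c_{α+e_j,β}/(α!β!)) · [2|λ_j|⟨|λ'|,β'⟩ / ((⟨|λ''|,α''⟩+⟨|λ'|,β'⟩)(⟨|λ''|,α''⟩+⟨|λ'|,β'⟩+|λ_j|))] z̄^α z^β w̄_j, where e_j denotes the j-th standard unit multiindex. Then T ψ_3^1 = Σ_{j=1}^q 2λ_j w_j (−i ∂ψ_3^0/∂z_j + ∂φ_3/∂z_j) + Σ_{j=q+1}^n 2λ_j w̄_j (i ∂ψ_3^0/∂z̄_j + ∂φ_3/∂z̄_j). -/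

import Mathlib

/-!
Statement 0: the action of the derivation
`T = Σ_{j≤q} 2i|λ_j| z_j ∂/∂z_j + Σ_{j>q} 2i|λ_j| z̄_j ∂/∂z̄_j`
on the polynomial ring over ℂ in the 4n formal variables
`z_1,…,z_n, z̄_1,…,z̄_n, w_1,…,w_n, w̄_1,…,w̄_n`, at the level of coefficients.
We encode the variables as `Fin 4 × Fin n`, where `(0,j) = z_j`, `(1,j) = z̄_j`,
`(2,j) = w_j`, `(3,j) = w̄_j`.
-/

open MvPolynomial

attribute [local instance] Classical.propDecidable

noncomputable section

abbrev Var (n : ℕ) := Fin 4 × Fin n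

def zV {n : ℕ} (j : Fin n) : Var n := (0, j)
def zbV {n : ℕ} (j : Fin n) : Var n := (1, j)
def wV {n : ℕ} (j : Fin n) : Var n := (2, j)
def wbV {n : ℕ} (j : Fin n) : Var n := (3, j)

/-- The derivation `T = Σ_{1≤j≤q} 2i|λ_j| z_j ∂/∂z_j + Σ_{q+1≤j≤n} 2i|λ_j| z̄_j ∂/∂z̄_j`. -/
def Tder {n : ℕ} (q : ℕ) (lam : Fin n → ℝ) (g : MvPolynomial (Var n) ℂ) :
    MvPolynomial (Var n) ℂ :=
  ∑ j : Fin n,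
    if (j : ℕ) < q then
      C (2 * Complex.I * ((|lam j| : ℝ) : ℂ)) * X (zV j) * pderiv (zV j) g
    else
      C (2 * Complex.I * ((|lam j| : ℝ) : ℂ)) * X (zbV j) * pderiv (zbV j) g

/-- The exponent function of the monomial `z̄^α z^β w̄^γ w^δ`. -/
def mIdx {n : ℕ} (α β γ δ : Fin n → ℕ) : Var n →₀ ℕ :=
  Finsupp.equivFunOnFinite.symm fun v =>
    if v.1 = 0 then β v.2
    else if v.1 = 1 then α v.2
    else if v.1 = 2 then δ v.2
    else γ v.2

/-- The condition `(α'', β') = (0,0)`. -/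
def cond0 {n : ℕ} (q : ℕ) (α β : Fin n → ℕ) : Prop :=
  ∀ j : Fin n, (q ≤ (j : ℕ) → α j = 0) ∧ ((j : ℕ) < q → β j = 0)

/-- `⟨|λ''|, α''⟩ + ⟨|λ'|, β'⟩`. -/
def wgt {n : ℕ} (q : ℕ) (lam : Fin n → ℝ) (α β : Fin n → ℕ) : ℝ :=
  ∑ j : Fin n, if (j : ℕ) < q then |lam j| * β j else |lam j| * α j

/-- `⟨λ'', α''⟩ + ⟨λ', β'⟩` (signed weight). -/
def swgt {n : ℕ} (q : ℕ) (lam : Fin n → ℝ) (α β : Fin n → ℕ) : ℝ :=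
  ∑ j : Fin n, if (j : ℕ) < q then lam j * β j else lam j * α j

/-- `α! = α_1! ⋯ α_n!`. -/
def factM {n : ℕ} (α : Fin n → ℕ) : ℕ := ∏ j : Fin n, (α j).factorial

/-- `⟨|λ''|, α''⟩`. -/
def wA {n : ℕ} (q : ℕ) (lam : Fin n → ℝ) (α : Fin n → ℕ) : ℝ :=
  ∑ j : Fin n, if q ≤ (j : ℕ) then |lam j| * α j else 0

/-- `⟨|λ'|, β'⟩`. -/
def wB {n : ℕ} (q : ℕ) (lam : Fin n → ℝ) (β : Fin n → ℕ) : ℝ :=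
  ∑ j : Fin n, if (j : ℕ) < q then |lam j| * β j else 0

/-- The `j`-th standard unit multiindex. -/
def eIdx {n : ℕ} (j : Fin n) : Fin n → ℕ := fun t => if t = j then 1 else 0

section helpers
variable {n : ℕ}

theorem mIdx_surj (m : Var n →₀ ℕ) : ∃ α β γ δ : Fin n → ℕ, m = mIdx α β γ δ := by
  refine ⟨fun j => m (1, j), fun j => m (0, j), fun j => m (3, j), fun j => m (2, j), ?_⟩
  ext ⟨k, j⟩
  fin_cases k <;> simp [mIdx]

theorem mIdx_z (α β γ δ : Fin n → ℕ) (j : Fin n) : mIdx α β γ δ (zV j) = β j := by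
  simp [mIdx, zV]
theorem mIdx_zb (α β γ δ : Fin n → ℕ) (j : Fin n) : mIdx α β γ δ (zbV j) = α j := by
  simp [mIdx, zbV]
theorem mIdx_w (α β γ δ : Fin n → ℕ) (j : Fin n) : mIdx α β γ δ (wV j) = δ j := by
  simp [mIdx, wV]
theorem mIdx_wb (α β γ δ : Fin n → ℕ) (j : Fin n) : mIdx α β γ δ (wbV j) = γ j := by
  simp [mIdx, wbV]

theorem mIdx_add_z (α β γ δ : Fin n → ℕ) (j : Fin n) :
    mIdx α β γ δ + Finsupp.single (zV j) 1 = mIdx α (fun t => β t + eIdx j t) γ δ := by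
  ext ⟨k, t⟩
  fin_cases k <;> simp [mIdx, zV, eIdx, Finsupp.single_apply, eq_comm]
theorem mIdx_add_zb (α β γ δ : Fin n → ℕ) (j : Fin n) :
    mIdx α β γ δ + Finsupp.single (zbV j) 1 = mIdx (fun t => α t + eIdx j t) β γ δ := by
  ext ⟨k, t⟩
  fin_cases k <;> simp [mIdx, zbV, eIdx, Finsupp.single_apply, eq_comm]
theorem mIdx_add_w (α β γ δ : Fin n → ℕ) (j : Fin n) :
    Finsupp.single (wV j) 1 + mIdx α β γ δ = mIdx α β γ (fun t => δ t + eIdx j t) := by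
  ext ⟨k, t⟩
  fin_cases k <;> simp [mIdx, wV, eIdx, Finsupp.single_apply, eq_comm, add_comm]
theorem mIdx_add_wb (α β γ δ : Fin n → ℕ) (j : Fin n) :
    Finsupp.single (wbV j) 1 + mIdx α β γ δ = mIdx α β (fun t => γ t + eIdx j t) δ := by
  ext ⟨k, t⟩
  fin_cases k <;> simp [mIdx, wbV, eIdx, Finsupp.single_apply, eq_comm, add_comm]

theorem coeff_X_mul_pd (v : Var n) (m : Var n →₀ ℕ) (g : MvPolynomial (Var n) ℂ) :
    coeff m (X v * pderiv v g) = (m v : ℂ) * coeff m g := by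
  rw [coeff_X_mul']
  split_ifs with h
  · have h1 : 1 ≤ m v := by
      have := Finsupp.mem_support_iff.mp h
      omega
    have h2 : m - Finsupp.single v 1 + Finsupp.single v 1 = m := by
      ext t
      by_cases ht : v = t
      · subst ht; simp; omega
      · simp [ht]
    rw [coeff_pderiv, h2]
    have h3 : (((m - Finsupp.single v 1 : Var n →₀ ℕ) v : ℕ) : ℂ) + 1 = (m v : ℂ) := by
      have : (m - Finsupp.single v 1 : Var n →₀ ℕ) v + 1 = m v := by simp; omega
      exact_mod_cast this
    rw [← h3]; ring
  · have : m v = 0 := by simpa using h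
    simp [this]

theorem wgt_eq (q : ℕ) (lam : Fin n → ℝ) (α β : Fin n → ℕ) :
    wgt q lam α β = wA q lam α + wB q lam β := by
  unfold wgt wA wB
  rw [← Finset.sum_add_distrib]
  refine Finset.sum_congr rfl fun j _ => ?_
  by_cases h : (j : ℕ) < q
  · simp [h, not_le.mpr h]
  · simp [h, not_lt.mp h]

theorem swgt_eq (q : ℕ) (lam : Fin n → ℝ)
    (hneg : ∀ j : Fin n, (j : ℕ) < q → lam j < 0)
    (hpos : ∀ j : Fin n, q ≤ (j : ℕ) → 0 < lam j) (α β : Fin n → ℕ) :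
    swgt q lam α β = wA q lam α - wB q lam β := by
  unfold swgt wA wB
  rw [← Finset.sum_sub_distrib]
  refine Finset.sum_congr rfl fun j _ => ?_
  by_cases h : (j : ℕ) < q
  · simp [h, not_le.mpr h, abs_of_neg (hneg j h)]
  · simp [h, not_lt.mp h, abs_of_pos (hpos j (not_lt.mp h))]

theorem wA_nonneg (q : ℕ) (lam : Fin n → ℝ) (α : Fin n → ℕ) : 0 ≤ wA q lam α :=
  Finset.sum_nonneg fun j _ => by split_ifs <;> positivity
theorem wB_nonneg (q : ℕ) (lam : Fin n → ℝ) (α : Fin n → ℕ) : 0 ≤ wB q lam α :=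
  Finset.sum_nonneg fun j _ => by split_ifs <;> positivity

theorem wA_zero (q : ℕ) (lam : Fin n → ℝ) (α : Fin n → ℕ)
    (h : ∀ t : Fin n, q ≤ (t : ℕ) → α t = 0) : wA q lam α = 0 :=
  Finset.sum_eq_zero fun j _ => by
    split_ifs with hj
    · simp [h j hj]
    · rfl
theorem wB_zero (q : ℕ) (lam : Fin n → ℝ) (α : Fin n → ℕ)
    (h : ∀ t : Fin n, (t : ℕ) < q → α t = 0) : wB q lam α = 0 :=
  Finset.sum_eq_zero fun j _ => by
    split_ifs with hj
    · simp [h j hj]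
    · rfl

theorem wA_pos (q : ℕ) (lam : Fin n → ℝ) (hpos : ∀ j : Fin n, q ≤ (j : ℕ) → 0 < lam j)
    (α : Fin n → ℕ) (h : ¬ ∀ t : Fin n, q ≤ (t : ℕ) → α t = 0) : 0 < wA q lam α := by
  push Not at h
  obtain ⟨t, ht, h0⟩ := h
  refine Finset.sum_pos' (fun j _ => by split_ifs <;> positivity) ⟨t, Finset.mem_univ _, ?_⟩
  rw [if_pos ht]
  have := abs_pos.mpr (hpos t ht).ne'
  have : 0 < α t := Nat.pos_of_ne_zero h0
  positivity
theorem wB_pos (q : ℕ) (lam : Fin n → ℝ) (hneg : ∀ j : Fin n, (j : ℕ) < q → lam j < 0)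
    (α : Fin n → ℕ) (h : ¬ ∀ t : Fin n, (t : ℕ) < q → α t = 0) : 0 < wB q lam α := by
  push Not at h
  obtain ⟨t, ht, h0⟩ := h
  refine Finset.sum_pos' (fun j _ => by split_ifs <;> positivity) ⟨t, Finset.mem_univ _, ?_⟩
  rw [if_pos ht]
  have := abs_pos.mpr (hneg t ht).ne
  have : 0 < α t := Nat.pos_of_ne_zero h0
  positivity

theorem wA_add (q : ℕ) (lam : Fin n → ℝ) (α : Fin n → ℕ) (j : Fin n) (hj : q ≤ (j : ℕ)) :
    wA q lam (fun t => α t + eIdx j t) = wA q lam α + |lam j| := by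
  have : |lam j| = ∑ t : Fin n, if t = j then |lam j| else 0 := by simp
  unfold wA
  rw [this, ← Finset.sum_add_distrib]
  refine Finset.sum_congr rfl fun t _ => ?_
  by_cases h : t = j
  · subst h; simp [hj, eIdx]; ring
  · simp [h, eIdx]
theorem wB_add (q : ℕ) (lam : Fin n → ℝ) (α : Fin n → ℕ) (j : Fin n) (hj : (j : ℕ) < q) :
    wB q lam (fun t => α t + eIdx j t) = wB q lam α + |lam j| := by
  have : |lam j| = ∑ t : Fin n, if t = j then |lam j| else 0 := by simp
  unfold wB
  rw [this, ← Finset.sum_add_distrib]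
  refine Finset.sum_congr rfl fun t _ => ?_
  by_cases h : t = j
  · subst h; simp [hj, eIdx]; ring
  · simp [h, eIdx]

theorem sum_eIdx (α : Fin n → ℕ) (j : Fin n) : ∑ t, (α t + eIdx j t) = (∑ t, α t) + 1 := by
  simp [Finset.sum_add_distrib, eIdx]

theorem factM_add (α : Fin n → ℕ) (j : Fin n) :
    factM (fun t => α t + eIdx j t) = (α j + 1) * factM α := by
  have : α j + 1 = ∏ t : Fin n, if t = j then α j + 1 else 1 := by simp
  unfold factM
  rw [this, ← Finset.prod_mul_distrib]
  refine Finset.prod_congr rfl fun t _ => ?_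
  by_cases h : t = j
  · subst h; simp [eIdx, Nat.factorial_succ]
  · simp [h, eIdx]

theorem factM_ne (α : Fin n → ℕ) : (factM α : ℂ) ≠ 0 := by
  have : factM α ≠ 0 := Finset.prod_ne_zero_iff.mpr fun j _ => Nat.factorial_ne_zero _
  exact_mod_cast this

theorem eIdx_inj {i j : Fin n} (h : eIdx i = eIdx j) : i = j := by
  have := congrFun h i
  simpa [eIdx] using this

theorem eIdx_ne (i : Fin n) : eIdx i ≠ 0 := fun h => by
  have := congrFun h i
  simp [eIdx] at this

theorem eIdx_split (δ : Fin n → ℕ) (j : Fin n) (h : δ j ≠ 0) :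
    ∃ δ' : Fin n → ℕ, δ = fun t => δ' t + eIdx j t := by
  refine ⟨fun t => δ t - eIdx j t, ?_⟩
  funext t
  by_cases ht : t = j
  · subst ht; simp [eIdx]; omega
  · simp [eIdx, ht]

theorem add_eIdx_eq (δ : Fin n → ℕ) (j : Fin n) :
    (fun t => δ t + eIdx j t) = eIdx j ↔ δ = 0 := by
  constructor
  · intro h
    funext t
    have := congrFun h t
    simpa using this
  · rintro rfl; simp

theorem coeff_Tder (q : ℕ) (lam : Fin n → ℝ) (g : MvPolynomial (Var n) ℂ)
    (α β γ δ : Fin n → ℕ) :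
    coeff (mIdx α β γ δ) (Tder q lam g) =
      2 * Complex.I * ((wA q lam α + wB q lam β : ℝ) : ℂ) * coeff (mIdx α β γ δ) g := by
  rw [← wgt_eq]
  unfold Tder wgt
  rw [coeff_sum, Complex.ofReal_sum, Finset.mul_sum, Finset.sum_mul]
  refine Finset.sum_congr rfl fun j _ => ?_
  split_ifs with h
  · rw [mul_assoc, coeff_C_mul, coeff_X_mul_pd, mIdx_z]; push_cast; ring
  · rw [mul_assoc, coeff_C_mul, coeff_X_mul_pd, mIdx_zb]; push_cast; ring

theorem term_a (q : ℕ) (lam : Fin n → ℝ)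
    (hneg : ∀ j : Fin n, (j : ℕ) < q → lam j < 0)
    (hpos : ∀ j : Fin n, q ≤ (j : ℕ) → 0 < lam j)
    (c : (Fin n → ℕ) → (Fin n → ℕ) → ℂ)
    (φ₃ ψ₃₀ : MvPolynomial (Var n) ℂ)
    (hφ : ∀ α β γ δ : Fin n → ℕ,
      coeff (mIdx α β γ δ) φ₃ =
        if (∑ j, α j) + (∑ j, β j) = 3 ∧ γ = 0 ∧ δ = 0 then
          c α β / ((factM α * factM β : ℕ) : ℂ)
        else 0)
    (hψ0 : ∀ α β γ δ : Fin n → ℕ,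
      coeff (mIdx α β γ δ) ψ₃₀ =
        if (∑ j, α j) + (∑ j, β j) = 3 ∧ γ = 0 ∧ δ = 0 ∧ ¬ cond0 q α β then
          Complex.I * ((swgt q lam α β / wgt q lam α β : ℝ) : ℂ) *
            (c α β / ((factM α * factM β : ℕ) : ℂ))
        else 0) (j : Fin n) (hj : (j : ℕ) < q) (α β γ δ : Fin n → ℕ) :
    coeff (mIdx α β γ δ) (C ((2 * lam j : ℝ) : ℂ) * X (wV j) *
            (C (- Complex.I) * pderiv (zV j) ψ₃₀ + pderiv (zV j) φ₃)) =
      if (∑ t, α t) + (∑ t, β t) = 2 ∧ γ = 0 ∧ δ = eIdx j then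
        ((-4 * |lam j| * wA q lam α / (wA q lam α + wB q lam β + |lam j|) : ℝ) : ℂ) *
          (c α (fun t => β t + eIdx j t) / ((factM α * factM β : ℕ) : ℂ))
      else 0 := by
  rw [mul_assoc, coeff_C_mul]
  by_cases hd : δ j = 0
  · rw [coeff_X_mul', if_neg (by simpa [mIdx_w] using hd), if_neg, mul_zero]
    rintro ⟨-, -, rfl⟩
    simp [eIdx] at hd
  obtain ⟨δ, rfl⟩ := eIdx_split δ j hd
  rw [← mIdx_add_w, coeff_X_mul, coeff_add, coeff_C_mul, coeff_pderiv, coeff_pderiv,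
    mIdx_add_z, mIdx_z, hφ, hψ0]
  have hc : ¬ cond0 q α (fun t => β t + eIdx j t) := fun h => by
    have := (h j).2 hj
    simp [eIdx] at this
  have hs : (∑ t, α t) + (∑ t, (β t + eIdx j t)) = 3 ↔ (∑ t, α t) + (∑ t, β t) = 2 := by
    rw [sum_eIdx]; omega
  simp only [add_eIdx_eq, hs, hc, not_false_eq_true, and_true]
  split_ifs with h
  · rw [swgt_eq q lam hneg hpos, wgt_eq, wB_add q lam β j hj, factM_add]
    have hA := wA_nonneg q lam α
    have hB := wB_nonneg q lam β
    have hl : 0 < |lam j| := abs_pos.mpr (hneg j hj).ne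
    have hl' : lam j = -|lam j| := by rw [abs_of_neg (hneg j hj)]; ring
    generalize |lam j| = L at *
    rw [hl']
    generalize wA q lam α = A at *
    generalize wB q lam β = B at *
    have e : ((-4 * L * A / (A + B + L) : ℝ) : ℂ)
        = ((2 * -L : ℝ) : ℂ) * (((A - (B + L)) / (A + (B + L)) : ℝ) + 1) := by
      norm_cast
      have : A + B + L ≠ 0 := by positivity
      have : A + (B + L) ≠ 0 := by positivity
      push_cast
      field_simp
      ring
    rw [e]
    have h1 := factM_ne α
    have h2 := factM_ne β
    have h3 : (β j : ℂ) + 1 ≠ 0 := by exact Nat.cast_add_one_ne_zero _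
    generalize (((A - (B + L)) / (A + (B + L)) : ℝ) : ℂ) = R
    generalize c α (fun t => β t + eIdx j t) = K
    push_cast
    field_simp
    linear_combination ((L : ℂ) * K * R) * Complex.I_sq
  · simp

theorem term_b (q : ℕ) (lam : Fin n → ℝ)
    (hneg : ∀ j : Fin n, (j : ℕ) < q → lam j < 0)
    (hpos : ∀ j : Fin n, q ≤ (j : ℕ) → 0 < lam j)
    (c : (Fin n → ℕ) → (Fin n → ℕ) → ℂ)
    (φ₃ ψ₃₀ : MvPolynomial (Var n) ℂ)
    (hφ : ∀ α β γ δ : Fin n → ℕ,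
      coeff (mIdx α β γ δ) φ₃ =
        if (∑ j, α j) + (∑ j, β j) = 3 ∧ γ = 0 ∧ δ = 0 then
          c α β / ((factM α * factM β : ℕ) : ℂ)
        else 0)
    (hψ0 : ∀ α β γ δ : Fin n → ℕ,
      coeff (mIdx α β γ δ) ψ₃₀ =
        if (∑ j, α j) + (∑ j, β j) = 3 ∧ γ = 0 ∧ δ = 0 ∧ ¬ cond0 q α β then
          Complex.I * ((swgt q lam α β / wgt q lam α β : ℝ) : ℂ) *
            (c α β / ((factM α * factM β : ℕ) : ℂ))
        else 0) (j : Fin n) (hj : q ≤ (j : ℕ)) (α β γ δ : Fin n → ℕ) :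
    coeff (mIdx α β γ δ) (C ((2 * lam j : ℝ) : ℂ) * X (wbV j) *
            (C Complex.I * pderiv (zbV j) ψ₃₀ + pderiv (zbV j) φ₃)) =
      if (∑ t, α t) + (∑ t, β t) = 2 ∧ γ = eIdx j ∧ δ = 0 then
        ((4 * |lam j| * wB q lam β / (wA q lam α + wB q lam β + |lam j|) : ℝ) : ℂ) *
          (c (fun t => α t + eIdx j t) β / ((factM α * factM β : ℕ) : ℂ))
      else 0 := by
  rw [mul_assoc, coeff_C_mul]
  by_cases hd : γ j = 0
  · rw [coeff_X_mul', if_neg (by simpa [mIdx_wb] using hd), if_neg, mul_zero]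
    rintro ⟨-, rfl, -⟩
    simp [eIdx] at hd
  obtain ⟨γ, rfl⟩ := eIdx_split γ j hd
  rw [← mIdx_add_wb, coeff_X_mul, coeff_add, coeff_C_mul, coeff_pderiv, coeff_pderiv,
    mIdx_add_zb, mIdx_zb, hφ, hψ0]
  have hc : ¬ cond0 q (fun t => α t + eIdx j t) β := fun h => by
    have := (h j).1 hj
    simp [eIdx] at this
  have hs : (∑ t, (α t + eIdx j t)) + (∑ t, β t) = 3 ↔ (∑ t, α t) + (∑ t, β t) = 2 := by
    rw [sum_eIdx]; omega
  simp only [add_eIdx_eq, hs, hc, not_false_eq_true, and_true]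
  split_ifs with h
  · rw [swgt_eq q lam hneg hpos, wgt_eq, wA_add q lam α j hj, factM_add]
    have hA := wA_nonneg q lam α
    have hB := wB_nonneg q lam β
    have hl : 0 < |lam j| := abs_pos.mpr (hpos j hj).ne'
    have hl' : lam j = |lam j| := by rw [abs_of_pos (hpos j hj)]
    generalize |lam j| = L at *
    rw [hl']
    generalize wA q lam α = A at *
    generalize wB q lam β = B at *
    have e : ((4 * L * B / (A + B + L) : ℝ) : ℂ)
        = ((2 * L : ℝ) : ℂ) * (1 - ((A + L - B) / (A + L + B) : ℝ)) := by
      norm_cast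
      have : A + B + L ≠ 0 := by positivity
      have : A + L + B ≠ 0 := by positivity
      field_simp
      ring
    rw [e]
    have h1 := factM_ne α
    have h2 := factM_ne β
    have h3 : (α j : ℂ) + 1 ≠ 0 := by exact Nat.cast_add_one_ne_zero _
    generalize (((A + L - B) / (A + L + B) : ℝ) : ℂ) = R
    generalize c (fun t => α t + eIdx j t) β = K
    push_cast
    field_simp
    linear_combination ((L : ℂ) * K * R) * Complex.I_sq
  · simp

end helpers

/-- `T ψ₃¹ = Σ_{j≤q} 2λ_j w_j (−i ∂ψ₃⁰/∂z_j + ∂φ₃/∂z_j)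
 + Σ_{j>q} 2λ_j w̄_j (i ∂ψ₃⁰/∂z̄_j + ∂φ₃/∂z̄_j)`, where `φ₃`, `ψ₃⁰` and `ψ₃¹` are
the polynomials of the paper, described through their coefficients. -/
theorem statement3 (n q : ℕ) (hn : 1 ≤ n) (hq : q ≤ n) (lam : Fin n → ℝ)
    (hneg : ∀ j : Fin n, (j : ℕ) < q → lam j < 0)
    (hpos : ∀ j : Fin n, q ≤ (j : ℕ) → 0 < lam j)
    (c : (Fin n → ℕ) → (Fin n → ℕ) → ℂ)
    (φ₃ ψ₃₀ ψ₃₁ : MvPolynomial (Var n) ℂ)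
    (hφ : ∀ α β γ δ : Fin n → ℕ,
      coeff (mIdx α β γ δ) φ₃ =
        if (∑ j, α j) + (∑ j, β j) = 3 ∧ γ = 0 ∧ δ = 0 then
          c α β / ((factM α * factM β : ℕ) : ℂ)
        else 0)
    (hψ0 : ∀ α β γ δ : Fin n → ℕ,
      coeff (mIdx α β γ δ) ψ₃₀ =
        if (∑ j, α j) + (∑ j, β j) = 3 ∧ γ = 0 ∧ δ = 0 ∧ ¬ cond0 q α β then
          Complex.I * ((swgt q lam α β / wgt q lam α β : ℝ) : ℂ) *
            (c α β / ((factM α * factM β : ℕ) : ℂ))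
        else 0)
    -- the coefficients of `ψ₃¹` on the monomials `z̄^α z^β w_j`, `1 ≤ j ≤ q`, `|α|+|β| = 2`:
    (hψ1a : ∀ (j : Fin n), (j : ℕ) < q → ∀ α β : Fin n → ℕ,
      (∑ t, α t) + (∑ t, β t) = 2 →
      coeff (mIdx α β 0 (eIdx j)) ψ₃₁ =
        if ¬ (∀ t : Fin n, q ≤ (t : ℕ) → α t = 0) then
          Complex.I * (c α (fun t => β t + eIdx j t) / ((factM α * factM β : ℕ) : ℂ)) *
            ((2 * |lam j| * wA q lam α /
              ((wA q lam α + wB q lam β) * (wA q lam α + wB q lam β + |lam j|)) : ℝ) : ℂ)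
        else 0)
    -- the coefficients of `ψ₃¹` on the monomials `z̄^α z^β w̄_j`, `q+1 ≤ j ≤ n`, `|α|+|β| = 2`:
    (hψ1b : ∀ (j : Fin n), q ≤ (j : ℕ) → ∀ α β : Fin n → ℕ,
      (∑ t, α t) + (∑ t, β t) = 2 →
      coeff (mIdx α β (eIdx j) 0) ψ₃₁ =
        if ¬ (∀ t : Fin n, (t : ℕ) < q → β t = 0) then
          - Complex.I * (c (fun t => α t + eIdx j t) β / ((factM α * factM β : ℕ) : ℂ)) *
            ((2 * |lam j| * wB q lam β /
              ((wA q lam α + wB q lam β) * (wA q lam α + wB q lam β + |lam j|)) : ℝ) : ℂ)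
        else 0)
    -- all other coefficients of `ψ₃¹` vanish:
    (hψ1c : ∀ α β γ δ : Fin n → ℕ,
      ¬ ((∑ t, α t) + (∑ t, β t) = 2 ∧
          ((∃ j : Fin n, (j : ℕ) < q ∧ γ = 0 ∧ δ = eIdx j) ∨
           (∃ j : Fin n, q ≤ (j : ℕ) ∧ δ = 0 ∧ γ = eIdx j))) →
      coeff (mIdx α β γ δ) ψ₃₁ = 0) :
    Tder q lam ψ₃₁ =
      ∑ j : Fin n,
        (if (j : ℕ) < q then
          C ((2 * lam j : ℝ) : ℂ) * X (wV j) *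
            (C (- Complex.I) * pderiv (zV j) ψ₃₀ + pderiv (zV j) φ₃)
        else
          C ((2 * lam j : ℝ) : ℂ) * X (wbV j) *
            (C Complex.I * pderiv (zbV j) ψ₃₀ + pderiv (zbV j) φ₃)) := by
  ext m
  obtain ⟨α, β, γ, δ, rfl⟩ := mIdx_surj m
  rw [coeff_Tder, coeff_sum]
  have key : ∀ j : Fin n, coeff (mIdx α β γ δ) (if (j : ℕ) < q then
          C ((2 * lam j : ℝ) : ℂ) * X (wV j) *
            (C (- Complex.I) * pderiv (zV j) ψ₃₀ + pderiv (zV j) φ₃)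
        else
          C ((2 * lam j : ℝ) : ℂ) * X (wbV j) *
            (C Complex.I * pderiv (zbV j) ψ₃₀ + pderiv (zbV j) φ₃)) =
      if (j : ℕ) < q then
        (if (∑ t, α t) + (∑ t, β t) = 2 ∧ γ = 0 ∧ δ = eIdx j then
        ((-4 * |lam j| * wA q lam α / (wA q lam α + wB q lam β + |lam j|) : ℝ) : ℂ) *
          (c α (fun t => β t + eIdx j t) / ((factM α * factM β : ℕ) : ℂ))
        else 0)
      else
        (if (∑ t, α t) + (∑ t, β t) = 2 ∧ γ = eIdx j ∧ δ = 0 then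
        ((4 * |lam j| * wB q lam β / (wA q lam α + wB q lam β + |lam j|) : ℝ) : ℂ) *
          (c (fun t => α t + eIdx j t) β / ((factM α * factM β : ℕ) : ℂ))
        else 0) := by
    intro j
    by_cases hj : (j : ℕ) < q
    · rw [if_pos hj, if_pos hj]
      exact term_a q lam hneg hpos c φ₃ ψ₃₀ hφ hψ0 j hj α β γ δ
    · rw [if_neg hj, if_neg hj]
      exact term_b q lam hneg hpos c φ₃ ψ₃₀ hφ hψ0 j (not_lt.mp hj) α β γ δ
  rw [Finset.sum_congr rfl fun j _ => key j]
  by_cases H : ((∑ t, α t) + (∑ t, β t) = 2 ∧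
          ((∃ j : Fin n, (j : ℕ) < q ∧ γ = 0 ∧ δ = eIdx j) ∨
           (∃ j : Fin n, q ≤ (j : ℕ) ∧ δ = 0 ∧ γ = eIdx j)))
  · obtain ⟨h2, ⟨j, hj, rfl, rfl⟩ | ⟨j, hj, rfl, rfl⟩⟩ := H
    · rw [Finset.sum_eq_single j]
      · rw [if_pos hj, if_pos ⟨h2, rfl, rfl⟩, hψ1a j hj α β h2]
        have hl : 0 < |lam j| := abs_pos.mpr (hneg j hj).ne
        have hB := wB_nonneg q lam β
        split_ifs with h
        · rw [wA_zero q lam α h]; simp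
        · have hA := wA_pos q lam hpos α h
          generalize |lam j| = L at *
          generalize wA q lam α = A at *
          generalize wB q lam β = B at *
          have e : ((-4 * L * A / (A + B + L) : ℝ) : ℂ) =
              -2 * ((A + B : ℝ) : ℂ) * ((2 * L * A / ((A + B) * (A + B + L)) : ℝ) : ℂ) := by
            norm_cast
            have : A + B + L ≠ 0 := by positivity
            have : A + B ≠ 0 := by positivity
            push_cast
            field_simp
            ring
          rw [e]
          generalize ((2 * L * A / ((A + B) * (A + B + L)) : ℝ) : ℂ) = R
          generalize c α (fun t => β t + eIdx j t) / ((factM α * factM β : ℕ) : ℂ) = K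
          linear_combination (2 * ((A + B : ℝ) : ℂ) * R * K) * Complex.I_sq
      · intro i _ hi
        split_ifs with h1 h2 h2
        · exact absurd (eIdx_inj h2.2.2).symm hi
        · rfl
        · exact absurd h2.2.2 (eIdx_ne j)
        · rfl
      · simp
    · rw [Finset.sum_eq_single j]
      · rw [if_neg (not_lt.mpr hj), if_pos ⟨h2, rfl, rfl⟩, hψ1b j hj α β h2]
        have hl : 0 < |lam j| := abs_pos.mpr (hpos j hj).ne'
        have hA := wA_nonneg q lam α
        split_ifs with h
        · rw [wB_zero q lam β h]; simp
        · have hB := wB_pos q lam hneg β h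
          generalize |lam j| = L at *
          generalize wA q lam α = A at *
          generalize wB q lam β = B at *
          have e : ((4 * L * B / (A + B + L) : ℝ) : ℂ) =
              2 * ((A + B : ℝ) : ℂ) * ((2 * L * B / ((A + B) * (A + B + L)) : ℝ) : ℂ) := by
            norm_cast
            have : A + B + L ≠ 0 := by positivity
            have : A + B ≠ 0 := by positivity
            push_cast
            field_simp
            ring
          rw [e]
          generalize ((2 * L * B / ((A + B) * (A + B + L)) : ℝ) : ℂ) = R
          generalize c (fun t => α t + eIdx j t) β / ((factM α * factM β : ℕ) : ℂ) = K
          linear_combination (-2 * ((A + B : ℝ) : ℂ) * R * K) * Complex.I_sq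
      · intro i _ hi
        split_ifs with h1 h2 h2
        · exact absurd h2.2.1 (eIdx_ne j)
        · rfl
        · exact absurd (eIdx_inj h2.2.1).symm hi
        · rfl
      · simp
  · rw [hψ1c α β γ δ H, mul_zero]
    symm
    refine Finset.sum_eq_zero fun j _ => ?_
    split_ifs with h1 h2 h2
    · exact absurd ⟨h2.1, Or.inl ⟨j, h1, h2.2⟩⟩ H
    · rfl
    · exact absurd ⟨h2.1, Or.inr ⟨j, not_lt.mp h1, h2.2.2, h2.2.1⟩⟩ H
    · rfl
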